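/- Let d ≥ 2, R > 0, D ≥ 0, and let φ : B_R^d → ℝ be a C² function whose second derivative has operator norm at most D at every point. For every δ with 0 < δ ≤ R(1 − 1/√2), setting ε = (7(1+√2)/√2)·D·(d−1)·R^(3/2)·δ^(1/2), there exists a fully-connected ReLU network F : ℝ^(d+1) → ℝ of width d+1 and depth at most (14/3)·d·(32R/δ)^((d+1)/2) such that for every (x,y) ∈ B_R^d × ℝ with |φ(x) − y| > ε one has sign(F(x,y)) = sign(φ(x) − y); consequently the zero set {(x,y) ∈ B_R^d × ℝ : F(x,y) = 0} is contained in the ε-band Σ_φ^ε(B_R^d). -/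

import Mathlib

/-!
The network collapses the ball `B_R` onto a small ball around its centre by cutting off thin caps,
and then linearizes `φ` at the centre.

For a unit vector `u`, a level `t` and a slope `c`, the map `collapse u t c` fixes the half-space
`⟪u, x⟫ ≤ t` and projects its complement onto the boundary along `(u, c)`. In the affine coordinates
`t - ⟪u, x⟫` and `d` functionals invariant under `(u, c)`, suitably shifted to be nonnegative, it is
a ReLU of the first coordinate, so that it costs one layer of width `d + 1`
(`Realizable.collapse`). The variable `y` is unbounded, but truncating it from below beneath the
graph of `φ` (`realizable_truncate`) is harmless and makes the shift possible.

On a cap of height `δ` of a ball of radius `r ≤ R` whose axis is `u`, and with `c` the derivative of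
`φ` in direction `u` at the centre of the base of the cap, a collapse by a distance `s` changes
`φ x - y` by at most `O(D * √(R * δ)) * s`, because the gradient is `D`-Lipschitz and the cap has
radius `O(√(R * δ))`. Moreover `s` is at most a constant times the decrease of `‖x‖`
(`collapse_cap`). Hence the errors telescope, and all collapses together change `φ x - y` by at
most `2 * D * √(R * δ) * R`, however many there are.

Collapsing the caps around a `√(δ / R)`-net of the unit sphere shrinks the radius by `δ / 2`
(`norm_le_of_net`). By comparing volumes in a thin shell, such a net can be chosen with
`O(d * (3 * √(R / δ)) ^ (d - 1))` points (`exists_sphere_net`), and at most `2 * R / δ` rounds lead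
to the radius `4 * δ` (`exists_rounds`), where linearizing at the centre costs `D * (4 * δ) ^ 2`.
-/

open scoped RealInnerProductSpace

/-- The componentwise ReLU layer `x ↦ ReLU (A x + b)`. -/
noncomputable def reluLayer {n : ℕ} (A : Matrix (Fin n) (Fin n) ℝ) (b : Fin n → ℝ) :
    (Fin n → ℝ) → (Fin n → ℝ) :=
  fun x i => max (A.mulVec x i + b i) 0

/-- `iterComp f N = f (N-1) ∘ ⋯ ∘ f 1 ∘ f 0`. -/
def iterComp {α : Type*} (f : ℕ → α → α) : ℕ → α → α
  | 0 => id
  | (k+1) => fun x => f k (iterComp f k x)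

/-! ### Networks as compositions of clamping maps -/

/-- The point `(x, y)` of `ℝ^d × ℝ` as an input vector of a network of width `d + 1`. -/
def encode {d : ℕ} (p : EuclideanSpace ℝ (Fin d) × ℝ) : Fin (d + 1) → ℝ :=
  Fin.snoc (fun i => p.1 i) p.2

/-- `g` is computed on `Ω`, up to an affine change of coordinates of the last hidden layer,
by `N` ReLU layers of width `d + 1`. -/
def Realizable {d : ℕ} (Ω : Set (EuclideanSpace ℝ (Fin d) × ℝ))
    (g : EuclideanSpace ℝ (Fin d) × ℝ → EuclideanSpace ℝ (Fin d) × ℝ) (N : ℕ) : Prop :=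
  ∃ (A : ℕ → Matrix (Fin (d+1)) (Fin (d+1)) ℝ) (b : ℕ → Fin (d+1) → ℝ)
    (Q : (Fin (d+1) → ℝ) →ᵃ[ℝ] (Fin (d+1) → ℝ)),
    ∀ p ∈ Ω, encode (g p) = Q (iterComp (fun k => reluLayer (A k) (b k)) N (encode p))

lemma iterComp_congr {α : Type*} {f f' : ℕ → α → α} (N : ℕ) (h : ∀ k < N, f k = f' k) :
    iterComp f N = iterComp f' N := by
  induction N with
  | zero => rfl
  | succ n ih =>
    funext x
    simp only [iterComp]
    rw [ih (fun k hk => h k (by omega)), h n (by omega)]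

/-- Affine maps before and after a componentwise ReLU can be absorbed into one layer, because the
preceding hidden layer is only used through an affine map. -/
lemma Realizable.step {d : ℕ} {Ω : Set (EuclideanSpace ℝ (Fin d) × ℝ)}
    {g g' : EuclideanSpace ℝ (Fin d) × ℝ → EuclideanSpace ℝ (Fin d) × ℝ} {N : ℕ}
    (hg : Realizable Ω g N) (P Q : (Fin (d+1) → ℝ) →ᵃ[ℝ] (Fin (d+1) → ℝ))
    (h : ∀ p ∈ Ω, encode (g' p) = Q (fun i => max (P (encode (g p)) i) 0)) :
    Realizable Ω g' (N + 1) := by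
  obtain ⟨A, b, S, hS⟩ := hg
  refine ⟨Function.update A N (LinearMap.toMatrix' (P.comp S).linear),
    Function.update b N ((P.comp S) 0), Q, fun p hp => ?_⟩
  have hcongr : iterComp (fun k => reluLayer
      (Function.update A N (LinearMap.toMatrix' (P.comp S).linear) k)
      (Function.update b N ((P.comp S) 0) k)) N = iterComp (fun k => reluLayer (A k) (b k)) N := by
    apply iterComp_congr
    intro k hk
    simp [Function.update_of_ne hk.ne]
  rw [h p hp]
  congr 1
  funext i
  simp only [iterComp]
  rw [hcongr, hS p hp]
  simp only [reluLayer, Function.update_self, LinearMap.toMatrix'_mulVec]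
  have := congrFun (AffineMap.decomp (P.comp S))
    (iterComp (fun k => reluLayer (A k) (b k)) N (encode p))
  simp only [AffineMap.coe_comp, Function.comp_apply, Pi.add_apply] at this ⊢
  rw [this]
  rfl

/-- The half-space `{⟪u, x⟫ ≤ t}` is fixed, and its complement is projected onto the boundary
hyperplane along the direction `(u, c)`. -/
noncomputable def collapse {d : ℕ} (u : EuclideanSpace ℝ (Fin d)) (t c : ℝ)
    (p : EuclideanSpace ℝ (Fin d) × ℝ) : EuclideanSpace ℝ (Fin d) × ℝ :=
  (p.1 - max (⟪u, p.1⟫ - t) 0 • u, p.2 - c * max (⟪u, p.1⟫ - t) 0)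

/-- In the coordinates `f` and `v i - (w i / w i₀) * v i₀` (for `i ≠ i₀`) a displacement along
`w` only changes `f`. -/
noncomputable def coordMap {n : ℕ} (f : (Fin n → ℝ) →ₗ[ℝ] ℝ) (w : Fin n → ℝ) (i₀ : Fin n) :
    (Fin n → ℝ) →ₗ[ℝ] (Fin n → ℝ) :=
  LinearMap.pi fun i =>
    if i = i₀ then f else LinearMap.proj i - (w i / w i₀) • LinearMap.proj i₀

lemma coordMap_injective {n : ℕ} (f : (Fin n → ℝ) →ₗ[ℝ] ℝ) (w : Fin n → ℝ) (i₀ : Fin n)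
    (hw : w i₀ ≠ 0) (hf : f w = -1) : Function.Injective (coordMap f w i₀) := by
  rw [injective_iff_map_eq_zero]
  intro v hv
  have h1 : v = (v i₀ / w i₀) • w := by
    funext i
    by_cases hi : i = i₀
    · subst hi; simp; field_simp
    · have := congrFun hv i
      simp [coordMap, hi] at this
      simp only [Pi.smul_apply, smul_eq_mul]
      linear_combination this
  have h2 : f v = 0 := by
    have := congrFun hv i₀
    simpa [coordMap] using this
  rw [h1, map_smul, hf] at h2
  have h3 : v i₀ / w i₀ = 0 := by simpa using h2
  rw [h1, h3, zero_smul]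

lemma encode_collapse {d : ℕ} (u : EuclideanSpace ℝ (Fin d)) (t c : ℝ)
    (p : EuclideanSpace ℝ (Fin d) × ℝ) :
    encode (collapse u t c p) = encode p - max (⟪u, p.1⟫ - t) 0 • encode (u, c) := by
  funext i
  refine Fin.lastCases ?_ (fun i => ?_) i
  · simp [encode, collapse, mul_comm]
  · simp [encode, collapse]

lemma Realizable.collapse {d : ℕ} {Ω : Set (EuclideanSpace ℝ (Fin d) × ℝ)}
    {g : EuclideanSpace ℝ (Fin d) × ℝ → EuclideanSpace ℝ (Fin d) × ℝ} {N : ℕ}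
    (hg : Realizable Ω g N) (hB : ∃ B, ∀ p ∈ Ω, ‖(g p).1‖ ≤ B ∧ -B ≤ (g p).2)
    (u : EuclideanSpace ℝ (Fin d)) (hu : ‖u‖ = 1) (t c : ℝ) :
    Realizable Ω (fun p => collapse u t c (g p)) (N + 1) := by
  obtain ⟨B, hB⟩ := hB
  obtain ⟨j, hj⟩ : ∃ j, u j ≠ 0 := by
    by_contra! h
    have : u = 0 := by ext i; simpa using h i
    simp [this] at hu
  set w : Fin (d+1) → ℝ := encode (u, c) with hw
  let f : (Fin (d+1) → ℝ) →ₗ[ℝ] ℝ := -∑ i : Fin d, u i • LinearMap.proj i.castSucc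
  have hf : ∀ q : EuclideanSpace ℝ (Fin d) × ℝ, f (encode q) = -⟪u, q.1⟫ := by
    intro q
    simp [f, encode, PiLp.inner_apply, mul_comm]
  have hfw : f w = -1 := by
    rw [hw, hf]; simp [hu]
  set i₀ : Fin (d+1) := j.castSucc with hi₀
  have hwi : w i₀ ≠ 0 := by simpa [hw, encode, hi₀] using hj
  let T := LinearEquiv.ofInjectiveEndo (coordMap f w i₀) (coordMap_injective f w i₀ hwi hfw)
  have hT : ∀ v, T v = coordMap f w i₀ v := fun v => by
    simp only [T, LinearEquiv.coe_ofInjectiveEndo]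
  -- `K` makes all coordinates other than `f` nonnegative, so that the ReLU leaves them unchanged.
  let K : ℝ := B + B * ∑ i, |w i / w i₀|
  let κ : Fin (d+1) → ℝ := fun i => if i = i₀ then t else K
  let P : (Fin (d+1) → ℝ) →ᵃ[ℝ] (Fin (d+1) → ℝ) :=
    T.toLinearMap.toAffineMap + AffineMap.const ℝ _ κ
  have hP : ∀ v, P v = coordMap f w i₀ v + κ := fun v => by simp [P, hT]
  refine hg.step P
    (T.symm.toLinearMap.toAffineMap.comp (AffineMap.id ℝ _ - AffineMap.const ℝ _ κ))
    (fun p hp => ?_)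
  obtain ⟨hx, hy⟩ := hB p hp
  generalize g p = q at hx hy
  have hB0 : 0 ≤ B := (norm_nonneg _).trans hx
  have key : (fun i => max (P (encode q) i) 0)
      = T (encode (_root_.collapse u t c q)) + κ := by
    funext i
    rw [encode_collapse, ← hw, map_sub, map_smul]
    simp only [hP, hT, Pi.add_apply, Pi.sub_apply, Pi.smul_apply, smul_eq_mul]
    by_cases hi : i = i₀
    · subst hi
      simp only [coordMap, LinearMap.pi_apply, if_true, κ, hf, hfw]
      rcases le_total (⟪u, q.1⟫ - t) 0 with h | h
      · rw [max_eq_right h, max_eq_left (by linarith)]; ring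
      · rw [max_eq_left h, max_eq_right (by linarith)]; ring
    · simp only [coordMap, LinearMap.pi_apply, if_neg hi, κ, LinearMap.sub_apply,
        LinearMap.smul_apply, LinearMap.proj_apply, smul_eq_mul]
      rw [max_eq_left]
      · field_simp; ring
      · have h1 : -B ≤ encode q i := by
          refine Fin.lastCases ?_ (fun i => ?_) i
          · simpa [encode] using hy
          · have := (PiLp.norm_apply_le q.1 i).trans hx
            rw [Real.norm_eq_abs, abs_le] at this
            simpa [encode] using this.1
        have h2 : |encode q i₀| ≤ B := by
          have := (PiLp.norm_apply_le q.1 j).trans hx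
          simpa [encode, hi₀] using this
        have h3 : |w i / w i₀ * encode q i₀| ≤ (∑ i, |w i / w i₀|) * B := by
          rw [abs_mul]
          have := Finset.single_le_sum (f := fun i => |w i / w i₀|)
            (fun i _ => abs_nonneg _) (Finset.mem_univ i)
          gcongr
        have h4 := (abs_le.1 h3).2
        simp only [K]
        linarith
  rw [key]
  simp

/-- One layer truncates `y` from below by any level on a region where `x` is bounded. -/
lemma realizable_truncate {d : ℕ} (R M : ℝ) :
    Realizable {p : EuclideanSpace ℝ (Fin d) × ℝ | ‖p.1‖ < R}
      (fun p => (p.1, max p.2 (-M))) 1 := by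
  have h0 : Realizable {p : EuclideanSpace ℝ (Fin d) × ℝ | ‖p.1‖ < R} id 0 :=
    ⟨fun _ => 0, fun _ => 0, AffineMap.id ℝ _, fun p _ => rfl⟩
  let κ : Fin (d+1) → ℝ := Fin.snoc (fun _ => R) M
  refine h0.step (AffineMap.id ℝ _ + AffineMap.const ℝ _ κ)
    (AffineMap.id ℝ _ - AffineMap.const ℝ _ κ) (fun p hp => ?_)
  funext i
  refine Fin.lastCases ?_ (fun i => ?_) i
  · simp only [encode, κ, id, AffineMap.coe_add, AffineMap.coe_sub, AffineMap.coe_id,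
      Pi.add_apply, Pi.sub_apply, AffineMap.const_apply, Fin.snoc_last]
    rw [← max_sub_sub_right]; simp
  · have := ((PiLp.norm_apply_le p.1 i).trans_lt hp)
    rw [Real.norm_eq_abs, abs_lt] at this
    simp only [encode, κ, id, AffineMap.coe_add, AffineMap.coe_sub, AffineMap.coe_id,
      Pi.add_apply, Pi.sub_apply, AffineMap.const_apply, Fin.snoc_castSucc]
    rw [max_eq_left (by linarith)]; ring

/-! ### Nets on the sphere -/

lemma pow_sub_pow_le_mul {a b : ℝ} (hb : 0 ≤ b) (hab : b ≤ a) (n : ℕ) :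
    a ^ n - b ^ n ≤ n * a ^ (n - 1) * (a - b) := by
  have h : |a ^ n - b ^ n| ≤ _ := abs_pow_sub_pow_le a b n
  rw [abs_of_nonneg hb, abs_of_nonneg (hb.trans hab), max_eq_left hab,
    abs_of_nonneg (sub_nonneg.2 hab)] at h
  calc a ^ n - b ^ n ≤ |a ^ n - b ^ n| := le_abs_self _
    _ ≤ _ := h
    _ = _ := by ring

/-- Separated unit vectors: disjoint balls of radius `η / 2` around them fit into the shell
`1 - η / 2 ≤ ‖z‖ < 1 + η / 2`, whose volume is of order `d * η`. -/
lemma card_le_of_separated {d : ℕ} (hd : 2 ≤ d) {η : ℝ} (hη : 0 < η) (hη1 : η ≤ 1)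
    (S : Finset (EuclideanSpace ℝ (Fin d))) (hS : ∀ u ∈ S, ‖u‖ = 1)
    (hsep : ∀ u ∈ S, ∀ v ∈ S, u ≠ v → η ≤ dist u v) :
    (S.card : ℝ) ≤ 2 * d * (3 / η) ^ (d - 1) := by
  classical
  have : Nonempty (Fin d) := ⟨⟨0, by omega⟩⟩
  let μ : MeasureTheory.Measure (EuclideanSpace ℝ (Fin d)) := MeasureTheory.volume
  have hball : ∀ (x : EuclideanSpace ℝ (Fin d)) (r : ℝ), 0 ≤ r →
      μ.real (Metric.ball x r) = r ^ d * μ.real (Metric.ball 0 1) := by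
    intro x r hr
    rw [MeasureTheory.measureReal_def, MeasureTheory.Measure.addHaar_ball μ x hr,
      ENNReal.toReal_mul, finrank_euclideanSpace_fin, ENNReal.toReal_ofReal (by positivity)]
    rfl
  have hV : 0 < μ.real (Metric.ball (0 : EuclideanSpace ℝ (Fin d)) 1) := by
    rw [MeasureTheory.measureReal_def]
    exact ENNReal.toReal_pos (Metric.measure_ball_pos μ _ one_pos).ne'
      MeasureTheory.measure_ball_lt_top.ne
  have hunion : μ.real (⋃ u ∈ S, Metric.ball u (η / 2)) =
      S.card * ((η / 2) ^ d * μ.real (Metric.ball 0 1)) := by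
    rw [MeasureTheory.measureReal_biUnion_finset]
    · rw [Finset.sum_congr rfl (fun u _ => hball u (η / 2) (by positivity))]
      simp
    · intro u hu v hv huv
      exact Metric.ball_disjoint_ball (by linarith [hsep u hu v hv huv])
    · intro u _; exact Metric.isOpen_ball.measurableSet
  have hdisj : Disjoint (⋃ u ∈ S, Metric.ball u (η / 2))
      (Metric.ball (0 : EuclideanSpace ℝ (Fin d)) (1 - η / 2)) := by
    rw [Set.disjoint_iUnion₂_left]
    intro u hu
    apply Metric.ball_disjoint_ball
    rw [dist_zero_right, hS u hu]; linarith
  have hsub : (⋃ u ∈ S, Metric.ball u (η / 2)) ∪ Metric.ball 0 (1 - η / 2) ⊆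
      Metric.ball (0 : EuclideanSpace ℝ (Fin d)) (1 + η / 2) := by
    apply Set.union_subset
    · apply Set.iUnion₂_subset
      intro u hu
      apply Metric.ball_subset_ball'
      rw [dist_zero_right, hS u hu]; linarith
    · exact Metric.ball_subset_ball (by linarith)
  have hle : μ.real ((⋃ u ∈ S, Metric.ball u (η / 2)) ∪ Metric.ball 0 (1 - η / 2)) ≤
      μ.real (Metric.ball (0 : EuclideanSpace ℝ (Fin d)) (1 + η / 2)) :=
    MeasureTheory.measureReal_mono hsub MeasureTheory.measure_ball_lt_top.ne
  rw [MeasureTheory.measureReal_union hdisj Metric.isOpen_ball.measurableSet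
    (MeasureTheory.measure_ne_top_of_subset (Set.subset_union_left.trans hsub)
      MeasureTheory.measure_ball_lt_top.ne)
    MeasureTheory.measure_ball_lt_top.ne, hunion, hball _ (1 - η / 2) (by linarith),
    hball _ (1 + η / 2) (by linarith)] at hle
  have h1 : (S.card : ℝ) * (η / 2) ^ d ≤ (1 + η / 2) ^ d - (1 - η / 2) ^ d := by
    have : ((S.card : ℝ) * (η / 2) ^ d + (1 - η / 2) ^ d) * μ.real (Metric.ball 0 1) ≤
        (1 + η / 2) ^ d * μ.real (Metric.ball (0 : EuclideanSpace ℝ (Fin d)) 1) := by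
      linarith
    linarith [le_of_mul_le_mul_right this hV]
  have h2 := pow_sub_pow_le_mul (a := 1 + η / 2) (b := 1 - η / 2) (by linarith) (by linarith) d
  have h3 : (1 + η / 2) ^ (d - 1) ≤ (3 / 2 : ℝ) ^ (d - 1) := by
    gcongr; linarith
  obtain ⟨m, rfl⟩ : ∃ m, d = m + 1 := ⟨d - 1, by omega⟩
  simp only [Nat.add_sub_cancel] at h2 h3 ⊢
  have h4 : (S.card : ℝ) * (η / 2) ^ (m + 1) ≤
      (2 * ((m + 1 : ℕ) : ℝ) * (3 / η) ^ m) * (η / 2) ^ (m + 1) := by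
    have e : (2 * ((m + 1 : ℕ) : ℝ) * (3 / η) ^ m) * (η / 2) ^ (m + 1) =
        ((m + 1 : ℕ) : ℝ) * (3 / 2) ^ m * η := by
      have : (3 / 2 : ℝ) = (3 / η) * (η / 2) := by field_simp
      rw [this, mul_pow, pow_succ]; ring
    rw [e]
    calc _ ≤ _ := h1
      _ ≤ _ := h2
      _ = ((m + 1 : ℕ) : ℝ) * (1 + η / 2) ^ m * η := by ring
      _ ≤ _ := by gcongr
  exact le_of_mul_le_mul_right h4 (by positivity)

/-- A maximal separated set of unit vectors is a net. -/
lemma exists_sphere_net {d : ℕ} (hd : 2 ≤ d) {η : ℝ} (hη : 0 < η) (hη1 : η ≤ 1) :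
    ∃ S : Finset (EuclideanSpace ℝ (Fin d)), (∀ u ∈ S, ‖u‖ = 1) ∧
      (∀ e : EuclideanSpace ℝ (Fin d), ‖e‖ = 1 → ∃ u ∈ S, ‖u - e‖ ≤ η) ∧
      (S.card : ℝ) ≤ 2 * d * (3 / η) ^ (d - 1) := by
  classical
  let good : Finset (EuclideanSpace ℝ (Fin d)) → Prop := fun S =>
    (∀ u ∈ S, ‖u‖ = 1) ∧ ∀ u ∈ S, ∀ v ∈ S, u ≠ v → η ≤ dist u v
  let p : ℕ → Prop := fun n => ∃ S, good S ∧ S.card = n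
  have hbound : ∀ n, p n → n ≤ ⌊2 * (d : ℝ) * (3 / η) ^ (d - 1)⌋₊ := by
    rintro n ⟨S, hS, rfl⟩
    exact Nat.le_floor (card_le_of_separated hd hη hη1 S hS.1 hS.2)
  have hp0 : p 0 := ⟨∅, ⟨by simp, by simp⟩, rfl⟩
  obtain ⟨S, hS, hcard⟩ : p (Nat.findGreatest p ⌊2 * (d : ℝ) * (3 / η) ^ (d - 1)⌋₊) :=
    Nat.findGreatest_spec (Nat.zero_le _) hp0
  refine ⟨S, hS.1, fun e he => ?_, card_le_of_separated hd hη hη1 S hS.1 hS.2⟩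
  by_contra! hfar
  have heS : e ∉ S := fun h => by
    have := hfar e h
    simp at this; linarith
  have hp : p (S.card + 1) := by
    refine ⟨insert e S, ⟨?_, ?_⟩, Finset.card_insert_of_notMem heS⟩
    · intro u hu
      rcases Finset.mem_insert.1 hu with rfl | hu
      · exact he
      · exact hS.1 u hu
    · intro u hu v hv huv
      rcases Finset.mem_insert.1 hu with rfl | hu' <;> rcases Finset.mem_insert.1 hv with rfl | hv'
      · exact absurd rfl huv
      · rw [dist_comm, dist_eq_norm]; exact (hfar v hv').le
      · rw [dist_eq_norm]; exact (hfar u hu').le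
      · exact hS.2 u hu' v hv' huv
  have := Nat.le_findGreatest (hbound _ hp) hp
  omega

/-! ### Differential estimates -/

/-- The gradient is `D`-Lipschitz on the ball. -/
lemma fderiv_lipschitz {d : ℕ} {R D : ℝ} {φ : EuclideanSpace ℝ (Fin d) → ℝ}
    (hφ : ContDiffOn ℝ 2 φ (Metric.ball 0 R))
    (hφD : ∀ x ∈ Metric.ball (0 : EuclideanSpace ℝ (Fin d)) R,
      ‖iteratedFDerivWithin ℝ 2 φ (Metric.ball 0 R) x‖ ≤ D) :
    ∃ φ' : EuclideanSpace ℝ (Fin d) → (EuclideanSpace ℝ (Fin d) →L[ℝ] ℝ),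
      (∀ x ∈ Metric.ball 0 R, HasFDerivAt φ (φ' x) x) ∧
      ∀ x ∈ Metric.ball 0 R, ∀ z ∈ Metric.ball 0 R, ‖φ' z - φ' x‖ ≤ D * ‖z - x‖ := by
  have hu : UniqueDiffOn ℝ (Metric.ball (0 : EuclideanSpace ℝ (Fin d)) R) :=
    Metric.isOpen_ball.uniqueDiffOn
  refine ⟨fderivWithin ℝ φ (Metric.ball 0 R), fun x hx => ?_, fun x hx z hz => ?_⟩
  · exact ((hφ.differentiableOn (by norm_num)) x hx).hasFDerivWithinAt.hasFDerivAt
      (Metric.isOpen_ball.mem_nhds hx)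
  · refine Convex.norm_image_sub_le_of_norm_fderivWithin_le (𝕜 := ℝ)
      (s := Metric.ball (0 : EuclideanSpace ℝ (Fin d)) R) ?_ ?_ (convex_ball _ _) hx hz
    · exact (hφ.fderivWithin (m := 1) hu (by norm_num)).differentiableOn (by norm_num)
    · intro y hy
      rw [← norm_iteratedFDerivWithin_one _ (hu y hy),
        norm_iteratedFDerivWithin_fderivWithin hu hy]
      exact hφD y hy

/-- Linearizing at `p` costs at most `D * ρ` per unit length on a convex set of points within
distance `ρ` of `p`. -/
lemma linearization_error {d : ℕ} {R D ρ : ℝ} (hD : 0 ≤ D) {φ : EuclideanSpace ℝ (Fin d) → ℝ}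
    {φ' : EuclideanSpace ℝ (Fin d) → (EuclideanSpace ℝ (Fin d) →L[ℝ] ℝ)}
    (h1 : ∀ x ∈ Metric.ball 0 R, HasFDerivAt φ (φ' x) x)
    (h2 : ∀ x ∈ Metric.ball 0 R, ∀ z ∈ Metric.ball 0 R, ‖φ' z - φ' x‖ ≤ D * ‖z - x‖)
    {s : Set (EuclideanSpace ℝ (Fin d))} (hs : Convex ℝ s) (hsR : s ⊆ Metric.ball 0 R)
    {p x z : EuclideanSpace ℝ (Fin d)} (hp : p ∈ Metric.ball 0 R)
    (hρ : ∀ y ∈ s, ‖y - p‖ ≤ ρ) (hx : x ∈ s) (hz : z ∈ s) :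
    |φ z - φ x - φ' p (z - x)| ≤ D * ρ * ‖z - x‖ := by
  have := Convex.norm_image_sub_le_of_norm_hasFDerivWithin_le (𝕜 := ℝ) (s := s) (C := D * ρ)
    (f := fun y => φ y - φ' p y) (f' := fun y => φ' y - φ' p) (x := x) (y := z)
    (fun y hy => ((h1 y (hsR hy)).sub (φ' p).hasFDerivAt).hasFDerivWithinAt)
    (fun y hy => (h2 p hp y (hsR hy)).trans (by gcongr; exact hρ y hy)) hs hx hz
  rw [Real.norm_eq_abs] at this
  refine le_trans (le_of_eq ?_) this
  rw [map_sub]; congr 1; ring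

/-! ### Peeling a ball by caps -/

/-- On the cap `{‖z‖ ≤ ‖x‖, t ≤ ⟪u, z⟫}` of height at most `δ = r - t`, the linearization of `φ` at
`t • u` is accurate up to `D * (3 / 2) * √(R * δ)` per unit length. -/
lemma cap_linearization {d : ℕ} {R D δ r t : ℝ} (hD : 0 ≤ D) (hδ : 0 < δ) (hr : 4 * δ ≤ r)
    (hrR : r ≤ R) (ht : t = r - δ)
    {φ : EuclideanSpace ℝ (Fin d) → ℝ}
    {φ' : EuclideanSpace ℝ (Fin d) → (EuclideanSpace ℝ (Fin d) →L[ℝ] ℝ)}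
    (h1 : ∀ x ∈ Metric.ball 0 R, HasFDerivAt φ (φ' x) x)
    (h2 : ∀ x ∈ Metric.ball 0 R, ∀ z ∈ Metric.ball 0 R, ‖φ' z - φ' x‖ ≤ D * ‖z - x‖)
    {u : EuclideanSpace ℝ (Fin d)} (hu : ‖u‖ = 1)
    {x x' : EuclideanSpace ℝ (Fin d)} (hqr : ‖x‖ ≤ r) (hqR : ‖x‖ < R) (hle : ‖x'‖ ≤ ‖x‖)
    (hux : t ≤ ⟪u, x⟫) (hux' : t ≤ ⟪u, x'⟫) :
    |φ x - φ x' - φ' (t • u) (x - x')| ≤ D * (3 / 2 * √(R * δ)) * ‖x - x'‖ := by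
  have ht0 : 0 < t := by linarith
  have hRδ : 0 ≤ R * δ := mul_nonneg (by linarith) hδ.le
  let S : Set (EuclideanSpace ℝ (Fin d)) := Metric.closedBall 0 ‖x‖ ∩ {z | t ≤ ⟪u, z⟫}
  have hlin : IsLinearMap ℝ (fun z : EuclideanSpace ℝ (Fin d) => ⟪u, z⟫) :=
    ⟨fun a b => inner_add_right _ _ _, fun a b => by simp [inner_smul_right]⟩
  have hSconv : Convex ℝ S := (convex_closedBall _ _).inter (convex_halfSpace_ge hlin t)
  have hSR : S ⊆ Metric.ball 0 R := fun z hz => by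
    have := hz.1
    rw [Metric.mem_closedBall, dist_zero_right] at this
    rw [Metric.mem_ball, dist_zero_right]; linarith
  have htu : t • u ∈ Metric.ball (0 : EuclideanSpace ℝ (Fin d)) R := by
    rw [Metric.mem_ball, dist_zero_right, norm_smul, hu, Real.norm_eq_abs, abs_of_pos ht0]
    linarith
  have hρ : ∀ z ∈ S, ‖z - t • u‖ ≤ 3 / 2 * √(R * δ) := by
    rintro z ⟨hz1, hz2⟩
    rw [Metric.mem_closedBall, dist_zero_right] at hz1
    replace hz2 : t ≤ ⟪u, z⟫ := hz2
    apply le_of_sq_le_sq _ (by positivity)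
    rw [norm_sub_sq_real, inner_smul_right, norm_smul, hu, real_inner_comm,
      Real.norm_eq_abs, mul_one, sq_abs, mul_pow, Real.sq_sqrt hRδ]
    have e1 : ‖z‖ ^ 2 ≤ r ^ 2 := by
      have := norm_nonneg z
      have : ‖z‖ ≤ r := hz1.trans hqr
      gcongr
    have e2 : t * t ≤ t * ⟪u, z⟫ := mul_le_mul_of_nonneg_left hz2 ht0.le
    have e3 : r ^ 2 - t ^ 2 ≤ 2 * (R * δ) := by
      have e4 : r ^ 2 - t ^ 2 = 2 * (r * δ) - δ ^ 2 := by rw [ht]; ring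
      have e5 : r * δ ≤ R * δ := mul_le_mul_of_nonneg_right hrR hδ.le
      rw [e4]; linarith [sq_nonneg δ]
    linarith
  exact linearization_error hD h1 h2 hSconv hSR htu hρ ⟨by simpa using hle, hux'⟩
    ⟨by simp, hux⟩

/-- Collapsing one cap `{‖x‖ ≤ r, ⟪u, x⟫ ≥ t}`, with slope the derivative of `φ` in direction `u`
at the centre `t • u` of its base. The cap lies within `(3 / 2) * √(R * δ)` of that centre, so the
value `φ x - y` changes by at most `D * (3 / 2) * √(R * δ)` times the length of the displacement,
and the latter is at most `4 / 3` times the decrease of `‖x‖`. Since `r ^ 2 ≤ 2 * t ^ 2`, a point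
of the base of the cap satisfies the constraint of every cap centred at an obtuse angle, so no
constraint obtained before is lost. -/
lemma collapse_cap {d : ℕ} {R D δ r : ℝ} (hD : 0 ≤ D) (hδ : 0 < δ) (hr : 4 * δ ≤ r) (hrR : r ≤ R)
    {φ : EuclideanSpace ℝ (Fin d) → ℝ}
    {φ' : EuclideanSpace ℝ (Fin d) → (EuclideanSpace ℝ (Fin d) →L[ℝ] ℝ)}
    (h1 : ∀ x ∈ Metric.ball 0 R, HasFDerivAt φ (φ' x) x)
    (h2 : ∀ x ∈ Metric.ball 0 R, ∀ z ∈ Metric.ball 0 R, ‖φ' z - φ' x‖ ≤ D * ‖z - x‖)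
    {u : EuclideanSpace ℝ (Fin d)} (hu : ‖u‖ = 1)
    {q q' : EuclideanSpace ℝ (Fin d) × ℝ} (hqr : ‖q.1‖ ≤ r) (hqR : ‖q.1‖ < R)
    (hq' : q' = collapse u (r - δ) (φ' ((r - δ) • u) u) q) :
    ‖q'.1‖ ≤ ‖q.1‖ ∧ ⟪u, q'.1⟫ ≤ r - δ ∧
    (∀ v, ‖v‖ = 1 → ⟪v, q.1⟫ ≤ r - δ → ⟪v, q'.1⟫ ≤ r - δ) ∧
    |(φ q'.1 - q'.2) - (φ q.1 - q.2)| ≤ 2 * D * √(R * δ) * (‖q.1‖ - ‖q'.1‖) ∧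
    q.2 - |φ' ((r - δ) • u) u| * R ≤ q'.2 := by
  obtain ⟨x, y⟩ := q
  set t := r - δ with ht
  set c := φ' (t • u) u with hc
  have htr : 3 / 4 * r ≤ t := by linarith
  have hr0 : 0 < r := by linarith
  have ht0 : 0 < t := by linarith
  simp only at hqr hqR
  have hux : ⟪u, x⟫ ≤ ‖x‖ := by simpa [hu] using real_inner_le_norm u x
  rcases le_total (⟪u, x⟫ - t) 0 with h | h
  · have : q' = (x, y) := by rw [hq', collapse]; simp [max_eq_right h]
    subst this
    refine ⟨le_rfl, by simpa using h, fun v _ hv => hv, by simp, ?_⟩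
    have : 0 ≤ |c| * R := mul_nonneg (abs_nonneg _) (by linarith)
    simpa using this
  set s := ⟪u, x⟫ - t with hs
  have hq1 : q'.1 = x - s • u := by rw [hq', collapse]; simp [← hs, max_eq_left h]
  have hq2 : q'.2 = y - c * s := by rw [hq', collapse]; simp [← hs, max_eq_left h]
  rw [hq1, hq2]
  simp only
  set x' := x - s • u with hx'
  have huu : ⟪u, u⟫ = 1 := by rw [real_inner_self_eq_norm_sq, hu]; norm_num
  have hux' : ⟪u, x'⟫ = t := by
    rw [hx', inner_sub_right, inner_smul_right, huu, hs]; ring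
  have hnorm : ‖x'‖ ^ 2 = ‖x‖ ^ 2 - 2 * s * t - s ^ 2 := by
    rw [hx', norm_sub_sq_real, inner_smul_right, norm_smul, hu, real_inner_comm,
      Real.norm_eq_abs, mul_one, sq_abs]
    have : ⟪u, x⟫ = s + t := by rw [hs]; ring
    rw [this]; ring
  have hst : 0 ≤ s * t := mul_nonneg h ht0.le
  have hle : ‖x'‖ ≤ ‖x‖ := by
    apply le_of_sq_le_sq _ (norm_nonneg _)
    linarith [sq_nonneg s]
  have hr2 : r ^ 2 - t ^ 2 ≤ t ^ 2 := by
    have : (3 / 4 * r) ^ 2 ≤ t ^ 2 := by gcongr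
    linarith [sq_nonneg r]
  -- The displacement is controlled by the decrease of the norm.
  have hslen : s ≤ 4 / 3 * (‖x‖ - ‖x'‖) := by
    have e1 : 2 * s * t ≤ 2 * r * (‖x‖ - ‖x'‖) := by
      have : ‖x‖ ^ 2 - ‖x'‖ ^ 2 = (‖x‖ + ‖x'‖) * (‖x‖ - ‖x'‖) := by ring
      have h3 : (‖x‖ + ‖x'‖) * (‖x‖ - ‖x'‖) ≤ (2 * r) * (‖x‖ - ‖x'‖) := by
        apply mul_le_mul_of_nonneg_right _ (by linarith)
        linarith
      linarith [sq_nonneg s]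
    have e2 : s * (3 / 4 * r) ≤ s * t := mul_le_mul_of_nonneg_left htr h
    have e3 : s * r ≤ (4 / 3 * (‖x‖ - ‖x'‖)) * r := by linarith
    exact le_of_mul_le_mul_right e3 hr0
  refine ⟨hle, hux'.le, ?_, ?_, ?_⟩
  · intro v hv hvx
    rcases le_total 0 ⟪v, u⟫ with hvu | hvu
    · rw [hx', inner_sub_right, inner_smul_right]
      linarith [mul_nonneg h hvu]
    · have hw : ‖x' - t • u‖ ≤ t := by
        apply le_of_sq_le_sq _ ht0.le
        rw [norm_sub_sq_real, inner_smul_right, norm_smul, hu, real_inner_comm, hux',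
          Real.norm_eq_abs, mul_one, sq_abs]
        have : ‖x'‖ ^ 2 ≤ r ^ 2 := by
          have := norm_nonneg x'
          gcongr; linarith
        linarith
      have e : ⟪v, x'⟫ = t * ⟪v, u⟫ + ⟪v, x' - t • u⟫ := by
        rw [inner_sub_right v x', inner_smul_right]; ring
      have e2 : ⟪v, x' - t • u⟫ ≤ ‖x' - t • u‖ := by
        simpa [hv] using real_inner_le_norm v (x' - t • u)
      rw [e]
      linarith [mul_nonpos_of_nonneg_of_nonpos ht0.le hvu]
  · have herr := cap_linearization hD hδ hr hrR ht h1 h2 hu hqr hqR hle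
      (by linarith) hux'.ge
    have hxx : x - x' = s • u := by rw [hx']; abel
    rw [hxx, map_smul, ← hc, norm_smul, hu, Real.norm_eq_abs, abs_of_nonneg h, mul_one,
      smul_eq_mul] at herr
    have e : (φ x' - (y - c * s)) - (φ x - y) = -(φ x - φ x' - s * c) := by ring
    rw [e, abs_neg]
    calc _ ≤ _ := herr
      _ ≤ D * (3 / 2 * √(R * δ)) * (4 / 3 * (‖x‖ - ‖x'‖)) := by gcongr
      _ = _ := by ring
  · have hsR : s ≤ R := by linarith
    have : c * s ≤ |c| * R := by
      calc c * s ≤ |c| * s := by gcongr; exact le_abs_self c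
        _ ≤ _ := by gcongr
    linarith

/-- A realizable map with controlled image, the induction hypothesis of the peeling: on
`Ω = {‖x‖ < R}` the image stays bounded in `x` and bounded below in `y`. -/
def Admissible {d : ℕ} (R : ℝ)
    (g : EuclideanSpace ℝ (Fin d) × ℝ → EuclideanSpace ℝ (Fin d) × ℝ) (N : ℕ) : Prop :=
  Realizable {p | ‖p.1‖ < R} g N ∧ ∃ B, ∀ p, ‖p.1‖ < R → ‖(g p).1‖ < R ∧ B ≤ (g p).2

/-- Collapsing the caps around a list of unit vectors one after the other. -/
lemma collapse_list {d : ℕ} {R D δ r : ℝ} (hD : 0 ≤ D) (hδ : 0 < δ) (hr : 4 * δ ≤ r) (hrR : r ≤ R)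
    {φ : EuclideanSpace ℝ (Fin d) → ℝ}
    {φ' : EuclideanSpace ℝ (Fin d) → (EuclideanSpace ℝ (Fin d) →L[ℝ] ℝ)}
    (h1 : ∀ x ∈ Metric.ball 0 R, HasFDerivAt φ (φ' x) x)
    (h2 : ∀ x ∈ Metric.ball 0 R, ∀ z ∈ Metric.ball 0 R, ‖φ' z - φ' x‖ ≤ D * ‖z - x‖)
    {g : EuclideanSpace ℝ (Fin d) × ℝ → EuclideanSpace ℝ (Fin d) × ℝ} {N : ℕ}
    (hg : Admissible R g N) (hgr : ∀ p, ‖p.1‖ < R → ‖(g p).1‖ ≤ r)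
    (l : List (EuclideanSpace ℝ (Fin d))) (hl : ∀ u ∈ l, ‖u‖ = 1) :
    ∃ g', Admissible R g' (N + l.length) ∧ ∀ p, ‖p.1‖ < R →
      ‖(g' p).1‖ ≤ ‖(g p).1‖ ∧ (∀ u ∈ l, ⟪u, (g' p).1⟫ ≤ r - δ) ∧
      |(φ (g' p).1 - (g' p).2) - (φ (g p).1 - (g p).2)| ≤
        2 * D * √(R * δ) * (‖(g p).1‖ - ‖(g' p).1‖) := by
  induction l with
  | nil => exact ⟨g, hg, fun p _ => ⟨le_rfl, by simp, by simp⟩⟩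
  | cons u l ih =>
    obtain ⟨g₁, ⟨hreal, B, hB⟩, hg₁⟩ := ih (fun v hv => hl v (List.mem_cons_of_mem _ hv))
    have hu : ‖u‖ = 1 := hl u List.mem_cons_self
    have hstep : ∀ p : EuclideanSpace ℝ (Fin d) × ℝ, ‖p.1‖ < R → _ := fun p hp =>
      collapse_cap (q := g₁ p) hD hδ hr hrR h1 h2 hu ((hg₁ p hp).1.trans (hgr p hp))
        (hB p hp).1 rfl
    refine ⟨fun p => collapse u (r - δ) (φ' ((r - δ) • u) u) (g₁ p), ⟨?_, ?_⟩, fun p hp => ?_⟩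
    · refine hreal.collapse ⟨max R (-B), fun p hp => ?_⟩ u hu _ _
      obtain ⟨hx, hy⟩ := hB p hp
      exact ⟨hx.le.trans (le_max_left _ _), by linarith [le_max_right R (-B)]⟩
    · refine ⟨B - |φ' ((r - δ) • u) u| * R, fun p hp => ⟨?_, ?_⟩⟩
      · exact (hstep p hp).1.trans_lt (hB p hp).1
      · linarith [(hstep p hp).2.2.2.2, (hB p hp).2]
    · obtain ⟨a1, a2, a3, a4, -⟩ := hstep p hp
      obtain ⟨b1, b2, b3⟩ := hg₁ p hp
      refine ⟨a1.trans b1, fun v hv => ?_, ?_⟩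
      · rcases List.mem_cons.1 hv with rfl | hv'
        · exact a2
        · exact a3 v (hl v hv) (b2 v hv')
      · rw [abs_le] at a4 b3 ⊢
        constructor <;> linarith [a4.1, a4.2, b3.1, b3.2]

/-- After collapsing the caps of height `δ` around a `√(δ / R)`-net, the ball of radius `r` has
been mapped into the ball of radius `r - δ / 2`. -/
lemma norm_le_of_net {d : ℕ} {R δ r : ℝ} (hδ : 0 < δ) (hr : 4 * δ ≤ r) (hrR : r ≤ R)
    {S : Finset (EuclideanSpace ℝ (Fin d))} (hS : ∀ u ∈ S, ‖u‖ = 1)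
    (hnet : ∀ e : EuclideanSpace ℝ (Fin d), ‖e‖ = 1 → ∃ u ∈ S, ‖u - e‖ ≤ √(δ / R))
    {x : EuclideanSpace ℝ (Fin d)} (hx : ‖x‖ ≤ R) (hxS : ∀ u ∈ S, ⟪u, x⟫ ≤ r - δ) :
    ‖x‖ ≤ r - δ / 2 := by
  have hR : 0 < R := by linarith
  rcases eq_or_ne x 0 with rfl | hx0
  · simp; linarith
  have hpos : 0 < ‖x‖ := norm_pos_iff.2 hx0
  obtain ⟨u, huS, hu⟩ := hnet (‖x‖⁻¹ • x) (by rw [norm_smul]; simp [hpos.ne'])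
  have h1 : ‖u - ‖x‖⁻¹ • x‖ ^ 2 ≤ δ / R := by
    rw [← Real.sq_sqrt (show 0 ≤ δ / R by positivity)]
    gcongr
  rw [norm_sub_sq_real, hS u huS, norm_smul, inner_smul_right] at h1
  simp only [norm_inv, norm_norm, inv_mul_cancel₀ hpos.ne'] at h1
  have h2 : ‖x‖ * (2 - δ / R) ≤ 2 * ⟪u, x⟫ := by
    have : 2 - δ / R ≤ 2 * (‖x‖⁻¹ * ⟪u, x⟫) := by linarith
    calc ‖x‖ * (2 - δ / R) ≤ ‖x‖ * (2 * (‖x‖⁻¹ * ⟪u, x⟫)) := by gcongr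
      _ = _ := by field_simp
  have h3 : ‖x‖ * (δ / R) ≤ δ := by
    calc ‖x‖ * (δ / R) ≤ R * (δ / R) := by gcongr
      _ = δ := by field_simp
  have := hxS u huS
  linarith

/-- Iterated peeling: `J` rounds map the ball of radius `R` into that of radius `R - J * δ / 2`. -/
lemma peel {d : ℕ} {R D δ : ℝ} (hD : 0 ≤ D) (hδ : 0 < δ)
    {φ : EuclideanSpace ℝ (Fin d) → ℝ}
    {φ' : EuclideanSpace ℝ (Fin d) → (EuclideanSpace ℝ (Fin d) →L[ℝ] ℝ)}
    (h1 : ∀ x ∈ Metric.ball 0 R, HasFDerivAt φ (φ' x) x)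
    (h2 : ∀ x ∈ Metric.ball 0 R, ∀ z ∈ Metric.ball 0 R, ‖φ' z - φ' x‖ ≤ D * ‖z - x‖)
    {S : Finset (EuclideanSpace ℝ (Fin d))} (hS : ∀ u ∈ S, ‖u‖ = 1)
    (hnet : ∀ e : EuclideanSpace ℝ (Fin d), ‖e‖ = 1 → ∃ u ∈ S, ‖u - e‖ ≤ √(δ / R))
    {g : EuclideanSpace ℝ (Fin d) × ℝ → EuclideanSpace ℝ (Fin d) × ℝ} {N : ℕ}
    (hg : Admissible R g N) (J : ℕ) (hJ : ∀ j < J, 4 * δ ≤ R - j * (δ / 2)) :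
    ∃ g', Admissible R g' (N + J * S.card) ∧ ∀ p, ‖p.1‖ < R →
      ‖(g' p).1‖ ≤ R - J * (δ / 2) ∧
      |(φ (g' p).1 - (g' p).2) - (φ (g p).1 - (g p).2)| ≤
        2 * D * √(R * δ) * (‖(g p).1‖ - ‖(g' p).1‖) := by
  induction J with
  | zero =>
    refine ⟨g, by simpa using hg, fun p hp => ⟨?_, by simp⟩⟩
    obtain ⟨B, hB⟩ := hg.2
    simpa using (hB p hp).1.le
  | succ J ih =>
    obtain ⟨g₁, hadm, hg₁⟩ := ih (fun j hj => hJ j (by omega))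
    have hr := hJ J (by omega)
    have hrR : R - J * (δ / 2) ≤ R := by
      have : 0 ≤ J * (δ / 2) := by positivity
      linarith
    obtain ⟨g₂, hadm₂, hg₂⟩ := collapse_list hD hδ hr hrR h1 h2 hadm (fun p hp => (hg₁ p hp).1)
      S.toList (fun u hu => hS u (Finset.mem_toList.1 hu))
    refine ⟨g₂, ?_, fun p hp => ⟨?_, ?_⟩⟩
    · rw [Finset.length_toList] at hadm₂
      rwa [show N + (J + 1) * S.card = N + J * S.card + S.card by ring]
    · obtain ⟨B, hB⟩ := hadm₂.2
      have := norm_le_of_net hδ hr hrR hS hnet (hB p hp).1.le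
        (fun u hu => (hg₂ p hp).2.1 u (Finset.mem_toList.2 hu))
      push_cast
      linarith
    · have a := (hg₁ p hp).2
      have b := (hg₂ p hp).2.2
      rw [abs_le] at a b ⊢
      constructor <;> linarith [a.1, a.2, b.1, b.2]

/-! ### Parameters and conclusion -/

/-- The first round after which the radius `R - J * δ / 2` is below `4 * δ`. -/
lemma exists_rounds {R δ : ℝ} (hR : 0 < R) (hδ : 0 < δ) :
    ∃ J : ℕ, (∀ j < J, 4 * δ ≤ R - j * (δ / 2)) ∧ R - J * (δ / 2) ≤ 4 * δ ∧
      (J : ℝ) ≤ 2 * (R / δ) := by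
  classical
  have hex : ∃ J : ℕ, R - J * (δ / 2) < 4 * δ := by
    obtain ⟨n, hn⟩ := exists_nat_gt (R / (δ / 2))
    refine ⟨n, ?_⟩
    rw [div_lt_iff₀ (by positivity)] at hn
    linarith
  refine ⟨Nat.find hex, fun j hj => not_lt.1 (Nat.find_min hex hj), (Nat.find_spec hex).le, ?_⟩
  rcases Nat.eq_zero_or_pos (Nat.find hex) with h | h
  · rw [h]; simp; positivity
  · have h1 := not_lt.1 (Nat.find_min hex (m := Nat.find hex - 1) (by omega))
    rw [Nat.cast_sub h] at h1
    have h2 : (Nat.find hex : ℝ) * δ ≤ 2 * R := by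
      push_cast at h1
      nlinarith
    rw [← mul_div_assoc, le_div_iff₀ hδ]
    exact h2

lemma depth_bound {d : ℕ} (hd : 2 ≤ d) {R δ : ℝ} (hR : 0 < R) (hδ : 0 < δ) (hδR : δ ≤ R)
    {J M : ℕ} (hJ : (J : ℝ) ≤ 2 * (R / δ))
    (hM : (M : ℝ) ≤ 2 * d * (3 / √(δ / R)) ^ (d - 1)) :
    ((1 + J * M : ℕ) : ℝ) ≤ (14/3) * d * (32 * R / δ) ^ (((d : ℝ) + 1) / 2) := by
  set q := √(R / δ) with hq
  have hq2 : q ^ 2 = R / δ := Real.sq_sqrt (by positivity)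
  have hq1 : 1 ≤ q := by
    rw [hq, Real.one_le_sqrt, le_div_iff₀ hδ]; linarith
  have h3 : 3 / √(δ / R) = 3 * q := by
    rw [hq, ← inv_div R δ, Real.sqrt_inv, div_inv_eq_mul]
  rw [h3] at hM
  rw [← hq2] at hJ
  obtain ⟨m, rfl⟩ : ∃ m, d = m + 1 := ⟨d - 1, by omega⟩
  simp only [Nat.add_sub_cancel] at hM
  have hpow : (3 * q) ^ (m + 2) ≤ (32 * R / δ) ^ ((((m + 1 : ℕ) : ℝ) + 1) / 2) := by
    have e : (3 * q) ^ (m + 2) = ((3 * q) ^ 2) ^ ((((m + 1 : ℕ) : ℝ) + 1) / 2) := by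
      rw [← Real.rpow_natCast (3 * q) 2, ← Real.rpow_mul (by positivity), ← Real.rpow_natCast]
      congr 1
      push_cast; ring
    rw [e]
    apply Real.rpow_le_rpow (by positivity) _ (by positivity)
    rw [mul_pow, hq2, mul_div_assoc]
    have : 0 ≤ R / δ := by positivity
    linarith
  set X := (3 * q) ^ m with hX
  have hX1 : 1 ≤ X := one_le_pow₀ (by linarith)
  have hd1 : (1 : ℝ) ≤ ((m + 1 : ℕ) : ℝ) := by exact_mod_cast Nat.succ_pos m
  set k : ℝ := ((m + 1 : ℕ) : ℝ) with hk
  have hJM : (J : ℝ) * M ≤ (2 * q ^ 2) * (2 * k * X) := by gcongr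
  have h1 : 1 ≤ k * X * q ^ 2 := by
    have : 1 ≤ q ^ 2 := one_le_pow₀ hq1
    exact one_le_mul_of_one_le_of_one_le (one_le_mul_of_one_le_of_one_le hd1 hX1) this
  calc ((1 + J * M : ℕ) : ℝ) = 1 + J * M := by push_cast; ring
    _ ≤ 5 * (k * X * q ^ 2) := by linarith
    _ ≤ 42 * (k * X * q ^ 2) := by linarith
    _ = (14 / 3) * k * (3 * q) ^ (m + 2) := by rw [pow_add, ← hX]; ring
    _ ≤ _ := by gcongr

lemma error_bound {d : ℕ} (hd : 2 ≤ d) {R D δ ε : ℝ} (hR : 0 < R) (hD : 0 ≤ D) (hδ : 0 < δ)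
    (hδR : δ ≤ R / 2)
    (hε : ε = (7 * (1 + Real.sqrt 2) / Real.sqrt 2) * D * ((d : ℝ) - 1) *
      R ^ ((3 : ℝ) / 2) * δ ^ ((1 : ℝ) / 2)) :
    2 * D * √(R * δ) * R + D * (4 * δ) ^ 2 ≤ ε := by
  have hR32 : R ^ ((3 : ℝ) / 2) = R * √R := by
    rw [show (3 : ℝ) / 2 = 1 + 1 / 2 by norm_num, Real.rpow_add hR, Real.rpow_one,
      ← Real.sqrt_eq_rpow]
  rw [hε, hR32, ← Real.sqrt_eq_rpow, Real.sqrt_mul hR.le]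
  set a := √R
  set b := √δ
  have hb : b * b = δ := Real.mul_self_sqrt hδ.le
  have hba : b ≤ a := Real.sqrt_le_sqrt (by linarith)
  have ha0 : 0 ≤ a := Real.sqrt_nonneg _
  have hb0 : 0 ≤ b := Real.sqrt_nonneg _
  have hC : 10 ≤ 7 * (1 + √2) / √2 := by
    have h2 : (0 : ℝ) < √2 := by positivity
    have : √2 ≤ 7 / 3 := by
      rw [Real.sqrt_le_left (by norm_num)]; norm_num
    rw [le_div_iff₀ h2]; linarith
  have hd1 : (1 : ℝ) ≤ (d : ℝ) - 1 := by
    have : (2 : ℝ) ≤ d := by exact_mod_cast hd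
    linarith
  have h16 : 16 * (δ * δ) ≤ 8 * (R * a * b) := by
    calc 16 * (δ * δ) ≤ 16 * (R / 2 * (a * b)) := by
          have : δ ≤ a * b := by rw [← hb]; gcongr
          gcongr
      _ = _ := by ring
  calc 2 * D * (a * b) * R + D * (4 * δ) ^ 2
      = D * (2 * (R * a * b) + 16 * (δ * δ)) := by ring
    _ ≤ D * (2 * (R * a * b) + 8 * (R * a * b)) := by gcongr
    _ = 10 * D * 1 * (R * a) * b := by ring
    _ ≤ _ := by gcongr

/-- Truncating `y` from below at a level under the graph and perturbing `φ x - y` by at most `ε`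
does not change a sign outside the `ε`-band. -/
lemma sign_eq_of_close {a y M ε F : ℝ} (hε : 0 ≤ ε) (haM : ε < a + M)
    (hF : |F - (a - max y (-M))| ≤ ε) (hy : ε < |a - y|) :
    Real.sign F = Real.sign (a - y) := by
  rw [abs_le] at hF
  rcases lt_abs.1 hy with h | h
  · have : max y (-M) < a - ε := max_lt (by linarith) (by linarith)
    rw [Real.sign_of_pos (by linarith), Real.sign_of_pos (by linarith)]
  · have := le_max_left y (-M)
    have h2 : max y (-M) = y := max_eq_left (by linarith)
    rw [h2] at hF
    rw [Real.sign_of_neg (by linarith), Real.sign_of_neg (by linarith)]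


/-- A deep fully-connected ReLU network of width `d+1` and depth at most
`(14/3)·d·(32R/δ)^((d+1)/2)` whose sign correctly classifies every point of `B_R^d × ℝ`
farther than `ε = (7(1+√2)/√2)·D·(d−1)·R^(3/2)·δ^(1/2)` from the graph of `φ`; consequently
its zero set is contained in the `ε`-band `Σ_φ^ε(B_R^d)`. -/
theorem relu_network_implicit_approximation_capacity
    (d : ℕ) (hd : 2 ≤ d) (R D : ℝ) (hR : 0 < R) (hD : 0 ≤ D)
    (φ : EuclideanSpace ℝ (Fin d) → ℝ)
    (hφ : ContDiffOn ℝ 2 φ (Metric.ball 0 R))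
    (hφD : ∀ x ∈ Metric.ball (0 : EuclideanSpace ℝ (Fin d)) R,
      ‖iteratedFDerivWithin ℝ 2 φ (Metric.ball 0 R) x‖ ≤ D)
    (δ : ℝ) (hδ0 : 0 < δ) (hδR : δ ≤ R * (1 - 1 / Real.sqrt 2))
    (ε : ℝ)
    (hε : ε = (7 * (1 + Real.sqrt 2) / Real.sqrt 2) * D * ((d : ℝ) - 1) *
      R ^ ((3 : ℝ) / 2) * δ ^ ((1 : ℝ) / 2)) :
    ∃ (N : ℕ) (A : ℕ → Matrix (Fin (d+1)) (Fin (d+1)) ℝ) (b : ℕ → Fin (d+1) → ℝ)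
      (L : (Fin (d+1) → ℝ) →ᵃ[ℝ] ℝ),
      (N : ℝ) ≤ (14/3) * d * (32 * R / δ) ^ (((d : ℝ) + 1) / 2) ∧
      (∀ x ∈ Metric.ball (0 : EuclideanSpace ℝ (Fin d)) R, ∀ y : ℝ, ε < |φ x - y| →
        Real.sign (L (iterComp (fun k => reluLayer (A k) (b k)) N (Fin.snoc (fun i => x i) y)))
          = Real.sign (φ x - y)) ∧
      {p : EuclideanSpace ℝ (Fin d) × ℝ |
          p.1 ∈ Metric.ball (0 : EuclideanSpace ℝ (Fin d)) R ∧
          L (iterComp (fun k => reluLayer (A k) (b k)) N (Fin.snoc (fun i => p.1 i) p.2)) = 0}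
        ⊆ {p : EuclideanSpace ℝ (Fin d) × ℝ |
            p.1 ∈ Metric.ball (0 : EuclideanSpace ℝ (Fin d)) R ∧ |φ p.1 - p.2| ≤ ε} := by
  obtain ⟨φ', h1, h2⟩ := fderiv_lipschitz hφ hφD
  have hδ2 : δ ≤ R / 2 := by
    have h3 : 1 / 2 ≤ 1 / √2 := by
      apply one_div_le_one_div_of_le (by positivity)
      rw [Real.sqrt_le_left (by norm_num)]; norm_num
    calc δ ≤ R * (1 - 1 / √2) := hδR
      _ ≤ R * (1 / 2) := by gcongr; linarith
      _ = R / 2 := by ring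
  have herr := error_bound hd hR hD hδ0 hδ2 hε
  have hε0 : 0 ≤ ε := le_trans (by positivity) herr
  -- The remainder of the linearization at the centre, which is used after the last layer.
  have hcentre : ∀ x : EuclideanSpace ℝ (Fin d), ‖x‖ < R →
      |φ x - φ 0 - φ' 0 x| ≤ D * ‖x‖ ^ 2 := by
    intro x hx
    have := linearization_error hD h1 h2 (s := Metric.closedBall 0 ‖x‖) (ρ := ‖x‖) (p := 0)
      (x := 0) (z := x) (convex_closedBall _ _) (Metric.closedBall_subset_ball hx)
      (by simpa using hR) (fun y hy => by simpa using hy) (by simp) (by simp)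
    simpa [pow_two, mul_assoc] using this
  -- The truncation level lies more than `ε` below the graph.
  obtain ⟨M, hM⟩ : ∃ M : ℝ, ∀ x : EuclideanSpace ℝ (Fin d), ‖x‖ < R → ε < φ x + M := by
    refine ⟨ε + 1 + |φ 0| + ‖φ' 0‖ * R + D * R ^ 2, fun x hx => ?_⟩
    have e1 := (abs_le.1 (hcentre x hx)).1
    have e2 : D * ‖x‖ ^ 2 ≤ D * R ^ 2 := by gcongr
    have e3 : -(‖φ' 0‖ * R) ≤ φ' 0 x := by
      have e4 : ‖φ' 0 x‖ ≤ ‖φ' 0‖ * R := (φ' 0).le_of_opNorm_le_of_le le_rfl hx.le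
      exact (abs_le.1 e4).1
    linarith [neg_abs_le (φ 0)]
  have hη : 0 < √(δ / R) := Real.sqrt_pos.2 (by positivity)
  have hη1 : √(δ / R) ≤ 1 := by
    rw [Real.sqrt_le_one, div_le_one hR]; linarith
  obtain ⟨S, hS, hnet, hcard⟩ := exists_sphere_net hd hη hη1
  obtain ⟨J, hJ, hJ4, hJR⟩ := exists_rounds hR hδ0
  have hadm : Admissible (d := d) R (fun p => (p.1, max p.2 (-M))) 1 :=
    ⟨realizable_truncate R M, -M, fun p hp => ⟨hp, le_max_right _ _⟩⟩
  obtain ⟨g, ⟨⟨A, b, Q, hQ⟩, B, hB⟩, hg⟩ := peel hD hδ0 h1 h2 hS hnet hadm J hJ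
  let ℓ : (Fin (d+1) → ℝ) →ₗ[ℝ] ℝ :=
    (φ' 0).toLinearMap ∘ₗ (WithLp.linearEquiv 2 ℝ (Fin d → ℝ)).symm.toLinearMap ∘ₗ
      LinearMap.funLeft ℝ ℝ Fin.castSucc - LinearMap.proj (Fin.last d)
  have hℓ : ∀ q : EuclideanSpace ℝ (Fin d) × ℝ, ℓ (encode q) = φ' 0 q.1 - q.2 := by
    intro q
    have : (WithLp.linearEquiv 2 ℝ (Fin d → ℝ)).symm
        (LinearMap.funLeft ℝ ℝ Fin.castSucc (encode q)) = q.1 := by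
      ext i
      simp [encode, LinearMap.funLeft_apply]
    simp only [ℓ, LinearMap.sub_apply, LinearMap.comp_apply, LinearEquiv.coe_coe, this]
    simp [encode]
  let L : (Fin (d+1) → ℝ) →ᵃ[ℝ] ℝ := (ℓ.toAffineMap + AffineMap.const ℝ _ (φ 0)).comp Q
  have hsign : ∀ x ∈ Metric.ball (0 : EuclideanSpace ℝ (Fin d)) R, ∀ y : ℝ, ε < |φ x - y| →
      Real.sign (L (iterComp (fun k => reluLayer (A k) (b k)) (1 + J * S.card)
        (Fin.snoc (fun i => x i) y))) = Real.sign (φ x - y) := by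
    intro x hx y hy
    rw [Metric.mem_ball, dist_zero_right] at hx
    refine sign_eq_of_close hε0 (hM x hx) ?_ hy
    have hL : L (iterComp (fun k => reluLayer (A k) (b k)) (1 + J * S.card)
        (Fin.snoc (fun i => x i) y)) = φ' 0 (g (x, y)).1 - (g (x, y)).2 + φ 0 := by
      have := hQ (x, y) hx
      rw [← hℓ, this]
      rfl
    rw [hL]
    obtain ⟨c1, c2⟩ := hg (x, y) hx
    have hgR := (hB (x, y) hx).1
    have c3 := hcentre _ hgR
    have c4 : D * ‖(g (x, y)).1‖ ^ 2 ≤ D * (4 * δ) ^ 2 := by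
      gcongr; exact c1.trans hJ4
    have c5 : 2 * D * √(R * δ) * (‖x‖ - ‖(g (x, y)).1‖) ≤ 2 * D * √(R * δ) * R := by
      gcongr; linarith [norm_nonneg (g (x, y)).1]
    simp only at c2
    rw [abs_le] at c2 c3 ⊢
    constructor <;> linarith [c2.1, c2.2, c3.1, c3.2]
  refine ⟨1 + J * S.card, A, b, L, depth_bound hd hR hδ0 (by linarith) hJR hcard, hsign, ?_⟩
  rintro ⟨x, y⟩ ⟨hx, h0⟩
  refine ⟨hx, ?_⟩
  by_contra! hlt
  have h3 := hsign x hx y hlt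
  rw [h0, Real.sign_zero, eq_comm, Real.sign_eq_zero_iff] at h3
  rw [h3, abs_zero] at hlt
  linarith
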